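/- arXiv:2103.00671 — 2 statements merged into one kernel-verified Lean document; each statement's English description precedes it below -/
import Mathlib

section
/- For every n ≥ 2, the class H_n = { x ↦ 1[⟨w,x⟩ + b ≥ 0] : w ∈ ℝⁿ, b ∈ ℝ } of linear classifiers on ℝⁿ is not robust learnable: there exist ε, δ ∈ (0,1) such that for every m ∈ ℕ and every (possibly randomized) learning algorithm A, there exist a target h* ∈ H_n and a distribution D over D_{h*} with P_{S_trn~D^m}( atk_D(h*, S_trn, A) > ε ) > δ. -/
open MeasureTheory ENNReal RealInnerProductSpace

/-- The multiset of training examples determined by a tuple of i.i.d. draws. -/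
def toTrain {α : Type*} {m : ℕ} (f : Fin m → α) : Multiset α := ↑(List.ofFn f)

/-- The distribution of `m` i.i.d. draws from `D`. -/
noncomputable def samples {α : Type*} [MeasurableSpace α] (D : Measure α) (m : ℕ) :
    Measure (Fin m → α) := Measure.pi fun _ => D

/-- The clean-label attackable rate of a randomized learner `a` with seed distribution `μ`. -/
noncomputable def atkRand {X : Type*} [MeasurableSpace X] {Ω : Type*} [MeasurableSpace Ω]
    (D : Measure (X × Bool)) (μ : Measure Ω) (h : X → Bool)
    (S : Multiset (X × Bool)) (a : Multiset (X × Bool) → Ω → X → Bool) : ℝ≥0∞ :=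
  ⨆ Adv : {f : X → Multiset (X × Bool) // ∀ x : X, ∀ p ∈ f x, p.2 = h p.1},
    (D.prod μ) {q : (X × Bool) × Ω | a (S + Adv.1 q.1.1) q.2 q.1.1 ≠ h q.1.1}

/-! In coordinates `(s, c)` on a plane, the classifier `[c ≤ q - s * p]` is given by the dual point
`(p, q)`, the example `(s, c)` is a dual line of slope `s`, and the label says on which side of the
line the dual point lies. Place `2 ^ N` dual points, indexed by a hypercube, and around each one two
families of `N` lines, one all below it and one all above it: the target `e` then has one training
distribution for each label `b`. If `e k ≠ b`, flipping the `k`-th bit of `e` and negating `b` keeps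
the `k`-th line while moving the dual point to its other side, and the remaining `N - 1` lines of
the new family get the label `!b` from both targets. Asked about line `k`, an attacker may therefore
hand the learner the training set that the other target would have produced, as long as line `k` was
not drawn. The learner sees the union of the two training sets in either case, so its two errors sum
to at least one. Averaging over the hypercube, where half of the lines can be flipped and at least
half of them are unseen, gives a target whose expected attackable rate is at least `1 / 8`. -/

open ProbabilityTheory Finset

section MeasureTheoreticPreliminaries

variable {α β γ : Type*} [MeasurableSpace α] [MeasurableSpace β] [MeasurableSpace γ]

lemma lintegral_measure_prodMk_left_le_map_prod (μ : Measure α) (ν : Measure γ) [SFinite ν]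
    {g : α → β} (hg : Measurable g) (s : Set (β × γ)) :
    ∫⁻ x, ν (Prod.mk (g x) ⁻¹' s) ∂μ ≤ (μ.map g).prod ν s := by
  have hs := measurableSet_toMeasurable ((μ.map g).prod ν) s
  rw [← measure_toMeasurable s, Measure.prod_apply hs,
    lintegral_map (measurable_measure_prodMk_left hs) hg]
  gcongr
  exact subset_toMeasurable _ _

lemma lintegral_le_measure_lt_add (μ : Measure α) [IsProbabilityMeasure μ] {f : α → ℝ≥0∞}
    (hf : ∀ x, f x ≤ 1) (t : ℝ≥0∞) : ∫⁻ x, f x ∂μ ≤ μ {x | t < f x} + t := by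
  calc ∫⁻ x, f x ∂μ ≤ ∫⁻ x, ({x | t < f x}.indicator 1 x + t) ∂μ := by
        refine lintegral_mono fun x => ?_
        by_cases hx : t < f x
        · simpa [hx] using (hf x).trans le_self_add
        · simp [hx, not_lt.1 hx]
    _ = ∫⁻ x, {x | t < f x}.indicator 1 x ∂μ + t := by
        rw [lintegral_add_right _ measurable_const, lintegral_const, measure_univ, mul_one]
    _ ≤ μ {x | t < f x} + t := by gcongr; exact lintegral_indicator_one_le _

lemma lintegral_uniformOn_univ [Fintype α] [MeasurableSingletonClass α] (f : α → ℝ≥0∞) :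
    ∫⁻ x, f x ∂uniformOn Set.univ = (∑ x, f x) / Fintype.card α := by
  simp [lintegral_fintype, uniformOn_univ, ← Finset.sum_mul, div_eq_mul_inv]

lemma samples_map (μ : Measure α) [IsProbabilityMeasure μ] {g : α → β} (hg : Measurable g)
    (m : ℕ) : samples (μ.map g) m = (samples μ m).map (g ∘ ·) := by
  have := Measure.isProbabilityMeasure_map (μ := μ) hg.aemeasurable
  exact (Measure.pi_map_pi fun _ => hg.aemeasurable).symm

instance (μ : Measure α) [IsProbabilityMeasure μ] (m : ℕ) :
    IsProbabilityMeasure (samples μ m) := by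
  unfold samples; infer_instance

end MeasureTheoreticPreliminaries

lemma mem_toTrain {α : Type*} {m : ℕ} {f : Fin m → α} {p : α} :
    p ∈ toTrain f ↔ ∃ i, f i = p := by
  simp [toTrain, List.mem_ofFn]

lemma atkRand_le_one {X Ω : Type*} [MeasurableSpace X] [MeasurableSpace Ω]
    (D : Measure (X × Bool)) [IsProbabilityMeasure D] (μ : Measure Ω) [IsProbabilityMeasure μ]
    (h : X → Bool) (S : Multiset (X × Bool)) (a : Multiset (X × Bool) → Ω → X → Bool) :
    atkRand D μ h S a ≤ 1 :=
  iSup_le fun _ => prob_le_one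

/-- The indices that do not occur in the sample `κ`. -/
def unseen {ι : Type*} [Fintype ι] [DecidableEq ι] {m : ℕ} (κ : Fin m → ι) : Finset ι :=
  (univ.image κ)ᶜ

lemma card_le_add_card_unseen {ι : Type*} [Fintype ι] [DecidableEq ι] {m : ℕ} (κ : Fin m → ι) :
    Fintype.card ι ≤ m + #(unseen κ) := by
  have h : #(univ.image κ) ≤ m := by simpa using card_image_le (s := univ) (f := κ)
  rw [unseen, ← card_add_card_compl (univ.image κ)]
  gcongr

/-- A finite configuration of targets `v : V`, each with `ι`-indexed examples of constant label,
in which `v` and `mirror k v` share their `k`-th example but label it differently, while `v` gives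
all other examples of `mirror k v` the label that `mirror k v` gives them. The data of `mirror k v`
is only meaningful for `v ∈ active k`. -/
structure MirrorFamily (X V ι : Type*) where
  target : V → X → Bool
  label : V → Bool
  point : V → ι → X
  active : ι → Finset V
  mirror : ι → V → V
  target_point : ∀ v k, target v (point v k) = label v
  point_injective : ∀ v, Function.Injective (point v)
  mirror_mem_active : ∀ {k v}, v ∈ active k → mirror k v ∈ active k
  mirror_mirror : ∀ {k v}, v ∈ active k → mirror k (mirror k v) = v
  label_mirror : ∀ {k v}, v ∈ active k → label (mirror k v) = !label v
  point_mirror_self : ∀ {k v}, v ∈ active k → point (mirror k v) k = point v k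
  target_point_mirror : ∀ {k v}, v ∈ active k → ∀ {j}, j ≠ k →
    target v (point (mirror k v) j) = label (mirror k v)

namespace MirrorFamily

variable {X V ι : Type*} (F : MirrorFamily X V ι) {m : ℕ}

/-- The `k`-th example of the target `v`, with its label. -/
def labeledPoint (v : V) (k : ι) : X × Bool := (F.point v k, F.label v)

/-- The training multiset of the target `v` obtained by drawing the indices `κ`. -/
def trainingSet (v : V) (κ : Fin m → ι) : Multiset (X × Bool) := toTrain (F.labeledPoint v ∘ κ)

section SwapAttack

variable [DecidableEq V] [Fintype ι] [DecidableEq ι]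

/-- The attack against the target `v` which, on the test point `F.point v k` with `k` active and
unseen, injects the training multiset of the mirrored target. -/
noncomputable def swapAttack (v : V) (κ : Fin m → ι) : X → Multiset (X × Bool) :=
  Function.extend (F.point v)
    (fun k => if v ∈ F.active k ∧ k ∈ unseen κ then F.trainingSet (F.mirror k v) κ else 0) 0

lemma swapAttack_point {v : V} {k : ι} {κ : Fin m → ι} (hv : v ∈ F.active k)
    (hk : k ∈ unseen κ) : F.swapAttack v κ (F.point v k) = F.trainingSet (F.mirror k v) κ := by
  rw [swapAttack, (F.point_injective v).extend_apply, if_pos ⟨hv, hk⟩]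

lemma eq_target_of_mem_swapAttack {v : V} {κ : Fin m → ι} {x : X} {p : X × Bool}
    (hp : p ∈ F.swapAttack v κ x) : p.2 = F.target v p.1 := by
  by_cases hx : ∃ k, F.point v k = x
  · obtain ⟨k, rfl⟩ := hx
    by_cases hk : v ∈ F.active k ∧ k ∈ unseen κ
    · rw [F.swapAttack_point hk.1 hk.2, trainingSet, mem_toTrain] at hp
      obtain ⟨i, rfl⟩ := hp
      have hi : κ i ≠ k := by
        rintro rfl
        simp [unseen] at hk
      exact (F.target_point_mirror hk.1 hi).symm
    · simp [swapAttack, (F.point_injective v).extend_apply, hk] at hp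
  · simp [swapAttack, Function.extend_apply' _ _ _ hx] at hp

end SwapAttack

section SwapError

variable {Ω : Type*} [MeasurableSpace Ω] (μ : Measure Ω)
  (a : Multiset (X × Bool) → Ω → X → Bool) (κ : Fin m → ι)

/-- The probability that the learner errs on the `k`-th example of `v` when it is given the
training multisets of both `v` and its mirror image. -/
noncomputable def swapError (k : ι) (v : V) : ℝ≥0∞ :=
  μ {ω | a (F.trainingSet v κ + F.trainingSet (F.mirror k v) κ) ω (F.point v k) ≠ F.label v}

lemma one_le_swapError_add_swapError_mirror [IsProbabilityMeasure μ] {k : ι} {v : V}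
    (hv : v ∈ F.active k) :
    1 ≤ F.swapError μ a κ k v + F.swapError μ a κ k (F.mirror k v) := by
  simp only [swapError, F.mirror_mirror hv, F.point_mirror_self hv, F.label_mirror hv,
    add_comm (F.trainingSet (F.mirror k v) κ)]
  refine le_trans ?_ (measure_union_le _ _)
  rw [← measure_univ (μ := μ)]
  gcongr
  intro ω _
  by_cases h : a (F.trainingSet v κ + F.trainingSet (F.mirror k v) κ) ω (F.point v k) = F.label v
  · exact Or.inr (by simp [h])
  · exact Or.inl h

lemma card_active_le_two_mul_sum_swapError [IsProbabilityMeasure μ] (k : ι) :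
    (#(F.active k) : ℝ≥0∞) ≤ 2 * ∑ v ∈ F.active k, F.swapError μ a κ k v := by
  have hmirror : ∑ v ∈ F.active k, F.swapError μ a κ k (F.mirror k v) =
      ∑ v ∈ F.active k, F.swapError μ a κ k v :=
    sum_nbij' (F.mirror k) (F.mirror k) (fun _ => F.mirror_mem_active)
      (fun _ => F.mirror_mem_active) (fun _ => F.mirror_mirror) (fun _ => F.mirror_mirror)
      fun _ _ => rfl
  calc (#(F.active k) : ℝ≥0∞) = ∑ v ∈ F.active k, 1 := by simp
    _ ≤ ∑ v ∈ F.active k, (F.swapError μ a κ k v + F.swapError μ a κ k (F.mirror k v)) :=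
        sum_le_sum fun v hv => F.one_le_swapError_add_swapError_mirror μ a κ hv
    _ = 2 * ∑ v ∈ F.active k, F.swapError μ a κ k v := by
        rw [sum_add_distrib, hmirror, two_mul]

lemma card_mul_card_le_sum_swapError [Fintype V] [DecidableEq V] [Fintype ι] [DecidableEq ι]
    [IsProbabilityMeasure μ] (hactive : ∀ k, Fintype.card V ≤ 2 * #(F.active k))
    (hm : 2 * m ≤ Fintype.card ι) :
    (Fintype.card ι * Fintype.card V : ℝ≥0∞) ≤
      8 * ∑ v, ∑ k ∈ unseen κ with v ∈ F.active k, F.swapError μ a κ k v := by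
  have hunseen : Fintype.card ι ≤ 2 * #(unseen κ) := by
    have := card_le_add_card_unseen κ
    omega
  have hcard (k : ι) : (Fintype.card V : ℝ≥0∞) ≤
      4 * ∑ v ∈ F.active k, F.swapError μ a κ k v :=
    calc (Fintype.card V : ℝ≥0∞) ≤ 2 * #(F.active k) := mod_cast hactive k
      _ ≤ 2 * (2 * ∑ v ∈ F.active k, F.swapError μ a κ k v) := by
          gcongr
          exact F.card_active_le_two_mul_sum_swapError μ a κ k
      _ = 4 * ∑ v ∈ F.active k, F.swapError μ a κ k v := by ring
  calc (Fintype.card ι * Fintype.card V : ℝ≥0∞)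
      ≤ 2 * #(unseen κ) * Fintype.card V := by gcongr; exact mod_cast hunseen
    _ = 2 * ∑ _ ∈ unseen κ, (Fintype.card V : ℝ≥0∞) := by simp [mul_assoc]
    _ ≤ 2 * ∑ k ∈ unseen κ, 4 * ∑ v ∈ F.active k, F.swapError μ a κ k v := by
        gcongr
        exact hcard _
    _ = 8 * ∑ k ∈ unseen κ, ∑ v ∈ F.active k, F.swapError μ a κ k v := by
        rw [← mul_sum]; ring
    _ = 8 * ∑ v, ∑ k ∈ unseen κ with v ∈ F.active k, F.swapError μ a κ k v := by
        congr 1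
        exact sum_comm' (by simp)

end SwapError

section Distribution

variable [MeasurableSpace X] [MeasurableSpace ι]

/-- The uniform distribution on the labelled examples of the target `v`. -/
noncomputable def distribution (v : V) : Measure (X × Bool) :=
  (uniformOn Set.univ).map (F.labeledPoint v)

variable [Finite ι] [MeasurableSingletonClass ι]

lemma measurable_labeledPoint (v : V) : Measurable (F.labeledPoint v) :=
  measurable_of_finite _

variable [Nonempty ι]

instance (v : V) : IsProbabilityMeasure (F.distribution v) :=
  Measure.isProbabilityMeasure_map (F.measurable_labeledPoint v).aemeasurable

lemma distribution_graph_target (v : V) :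
    F.distribution v {p | p.2 = F.target v p.1} = 1 := by
  refine le_antisymm prob_le_one ?_
  refine le_trans ?_ (Measure.le_map_apply (F.measurable_labeledPoint v).aemeasurable _)
  simp [labeledPoint, F.target_point]

lemma samples_distribution (v : V) :
    samples (F.distribution v) m =
      (samples (uniformOn Set.univ) m).map (F.labeledPoint v ∘ ·) :=
  samples_map _ (F.measurable_labeledPoint v) m

end Distribution

section AttackRate

variable [MeasurableSpace X] [Fintype ι] [MeasurableSpace ι] [MeasurableSingletonClass ι]

variable {Ω : Type*} [MeasurableSpace Ω] (μ : Measure Ω)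
  (a : Multiset (X × Bool) → Ω → X → Bool)

lemma sum_swapError_div_card_le_atkRand [DecidableEq V] [DecidableEq ι] [SFinite μ] (v : V)
    (κ : Fin m → ι) :
    (∑ k ∈ unseen κ with v ∈ F.active k, F.swapError μ a κ k v) / Fintype.card ι ≤
      atkRand (F.distribution v) μ (F.target v) (F.trainingSet v κ) a := by
  refine le_trans ?_ (le_iSup _ ⟨F.swapAttack v κ, fun _ _ => F.eq_target_of_mem_swapAttack⟩)
  refine le_trans ?_ (lintegral_measure_prodMk_left_le_map_prod _ _
    (F.measurable_labeledPoint v) _)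
  rw [lintegral_uniformOn_univ]
  gcongr
  refine (sum_le_sum fun k hk => ?_).trans (sum_le_univ_sum_of_nonneg fun _ => zero_le)
  obtain ⟨hk, hv⟩ := mem_filter.1 hk
  simp [swapError, labeledPoint, F.swapAttack_point hv hk, F.target_point]

variable [Fintype V] [IsProbabilityMeasure μ]
  (hactive : ∀ k, Fintype.card V ≤ 2 * #(F.active k))
include hactive

lemma card_le_eight_mul_sum_atkRand [Nonempty ι] (hm : 2 * m ≤ Fintype.card ι) (κ : Fin m → ι) :
    (Fintype.card V : ℝ≥0∞) ≤
      8 * ∑ v, atkRand (F.distribution v) μ (F.target v) (F.trainingSet v κ) a := by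
  classical
  calc (Fintype.card V : ℝ≥0∞) = Fintype.card ι * Fintype.card V / Fintype.card ι := by
        rw [mul_comm, ENNReal.mul_div_cancel_right (by simp) (by simp)]
    _ ≤ 8 * (∑ v, ∑ k ∈ unseen κ with v ∈ F.active k, F.swapError μ a κ k v) /
          Fintype.card ι := by
        exact ENNReal.div_le_div_right (F.card_mul_card_le_sum_swapError μ a κ hactive hm) _
    _ = 8 * ∑ v, (∑ k ∈ unseen κ with v ∈ F.active k, F.swapError μ a κ k v) /
          Fintype.card ι := by
        simp only [div_eq_mul_inv, sum_mul, mul_assoc]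
    _ ≤ 8 * ∑ v, atkRand (F.distribution v) μ (F.target v) (F.trainingSet v κ) a := by
        gcongr with v
        exact F.sum_swapError_div_card_le_atkRand μ a v κ

lemma exists_le_lintegral_atkRand [Nonempty ι] [Nonempty V] (hm : 2 * m ≤ Fintype.card ι) :
    ∃ v, 8⁻¹ ≤ ∫⁻ κ, atkRand (F.distribution v) μ (F.target v) (F.trainingSet v κ) a
      ∂samples (uniformOn Set.univ) m := by
  set I : V → ℝ≥0∞ := fun v =>
    ∫⁻ κ, atkRand (F.distribution v) μ (F.target v) (F.trainingSet v κ) a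
      ∂samples (uniformOn Set.univ) m
  have hsum : (Fintype.card V : ℝ≥0∞) ≤ 8 * ∑ v, I v := by
    calc (Fintype.card V : ℝ≥0∞)
        = ∫⁻ _ : Fin m → ι, Fintype.card V ∂samples (uniformOn Set.univ) m := by simp
      _ ≤ ∫⁻ κ, 8 * ∑ v, atkRand (F.distribution v) μ (F.target v) (F.trainingSet v κ) a
            ∂samples (uniformOn Set.univ) m :=
          lintegral_mono (F.card_le_eight_mul_sum_atkRand μ a hactive hm)
      _ = 8 * ∑ v, I v := by
          rw [lintegral_const_mul _ (measurable_of_finite _),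
            lintegral_finsetSum _ fun _ _ => measurable_of_finite _]
  obtain ⟨v, -, hv⟩ : ∃ v ∈ univ, 8⁻¹ ≤ I v := by
    refine ENNReal.exists_le_of_sum_le univ_nonempty ?_
    rw [sum_const, card_univ, nsmul_eq_mul, ← div_eq_mul_inv]
    exact ENNReal.div_le_of_le_mul' hsum
  exact ⟨v, hv⟩

theorem exists_lt_samples_lt_atkRand [Nonempty ι] [Nonempty V] (hm : 2 * m ≤ Fintype.card ι)
    {δ ε : ℝ≥0∞} (hδε : δ + ε < 8⁻¹) :
    ∃ v, δ < samples (F.distribution v) m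
      {f | ε < atkRand (F.distribution v) μ (F.target v) (toTrain f) a} := by
  obtain ⟨v, hv⟩ := F.exists_le_lintegral_atkRand μ a hactive hm
  refine ⟨v, lt_of_add_lt_add_right (a := ε) (hδε.trans_le (hv.trans ?_))⟩
  refine (lintegral_le_measure_lt_add _ (fun _ => atkRand_le_one _ _ _ _ _) ε).trans ?_
  rw [samples_distribution]
  gcongr
  exact Measure.le_map_apply (measurable_of_finite _).aemeasurable _

end AttackRate

end MirrorFamily

section SignedSum

/-- The sign `±1` encoded by a label. -/
def boolSign (b : Bool) : ℝ := bif b then 1 else -1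

lemma boolSign_not (b : Bool) : boolSign (!b) = -boolSign b := by cases b <;> simp [boolSign]

lemma decide_nonneg_boolSign_mul (b : Bool) {t : ℝ} (ht : 0 < t) :
    decide (0 ≤ boolSign b * t) = b := by
  cases b <;> simp [boolSign, ht, ht.le]

variable {ι : Type*} [Fintype ι]

/-- The sum `∑ ± t k` with the signs prescribed by the vertex `e` of the hypercube. -/
def signedSum (t : ι → ℝ) (e : ι → Bool) : ℝ := ∑ k, boolSign (e k) * t k

lemma signedSum_update [DecidableEq ι] (t : ι → ℝ) {e : ι → Bool} {k : ι} {b : Bool}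
    (he : e k = !b) :
    signedSum t (Function.update e k b) = signedSum t e + 2 * boolSign b * t k := by
  rw [← sub_eq_iff_eq_add', signedSum, signedSum, ← sum_sub_distrib, Fintype.sum_eq_single k]
  · rw [Function.update_self, he, boolSign_not]
    ring
  · intro j hj
    simp [hj]

end SignedSum

lemma exists_orthonormal_of_le_rank {𝕜 E : Type*} [RCLike 𝕜] [NormedAddCommGroup E]
    [InnerProductSpace 𝕜 E] {n : ℕ} (h : n ≤ Module.rank 𝕜 E) :
    ∃ u : Fin n → E, Orthonormal 𝕜 u :=
  have ⟨_, hf⟩ := exists_linearIndependent_of_le_rank h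
  ⟨_, InnerProductSpace.gramSchmidtNormed_orthonormal hf⟩

section DualPlane

variable {E : Type*} [NormedAddCommGroup E] [InnerProductSpace ℝ E] {u : Fin 2 → E}

/-- The vector with coordinates `s`, `c` in the plane spanned by `u`. -/
def planePoint (u : Fin 2 → E) (s c : ℝ) : E := s • u 0 + c • u 1

lemma inner_planePoint (hu : Orthonormal ℝ u) (s c s' c' : ℝ) :
    ⟪planePoint u s c, planePoint u s' c'⟫ = s * s' + c * c' := by
  have h01 : ⟪u 0, u 1⟫ = 0 := hu.2 (by decide)
  have h10 : ⟪u 1, u 0⟫ = 0 := hu.2 (by decide)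
  simp only [planePoint, inner_add_left, inner_add_right, real_inner_smul_left,
    real_inner_smul_right, real_inner_self_eq_norm_sq, hu.1, h01, h10]
  ring

/-- The linear classifier with dual point `(p, q)`: in the plane of `u` it labels `(s, c)` by
whether `c ≤ q - s * p`. -/
noncomputable def dualClassifier (u : Fin 2 → E) (p q : ℝ) (y : E) : Bool :=
  decide (0 ≤ ⟪planePoint u (-p) (-1), y⟫ + q)

lemma dualClassifier_planePoint (hu : Orthonormal ℝ u) {p q s c : ℝ} {b : Bool} {r : ℝ}
    (hr : 0 < r) (h : q - s * p - c = boolSign b * r) :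
    dualClassifier u p q (planePoint u s c) = b := by
  rw [dualClassifier, inner_planePoint hu, ← decide_nonneg_boolSign_mul b hr, ← h]
  congr 2
  ring

end DualPlane

lemma injective_of_pairwise_lt {ι : Type*} {t : ι → ℝ} (ht : ∀ k, t k ≠ 0)
    (hsep : Pairwise fun j k => 3 * t j * t k < t j ^ 2 + t k ^ 2) : Function.Injective t := by
  intro j k hjk
  by_contra hne
  have hlt : 3 * t j * t k < t j ^ 2 + t k ^ 2 := hsep hne
  have hpos : 0 < t k ^ 2 := by have := ht k; positivity
  rw [hjk] at hlt
  linarith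

section Hypercube

variable {ι : Type*}

/-- The vertex across the `k`-th edge with the opposite label. Setting the `k`-th bit to `v.2` flips
it only if `v.1 k = !v.2`, the only case in which this map is used. -/
def cubeMirror [DecidableEq ι] (k : ι) (v : (ι → Bool) × Bool) : (ι → Bool) × Bool :=
  (Function.update v.1 k v.2, !v.2)

lemma cubeMirror_cubeMirror [DecidableEq ι] {k : ι} {v : (ι → Bool) × Bool}
    (hv : v.1 k = !v.2) : cubeMirror k (cubeMirror k v) = v :=
  Prod.ext (by simp [cubeMirror, ← hv]) (by simp [cubeMirror])

variable {E : Type*} [NormedAddCommGroup E] [InnerProductSpace ℝ E] {u : Fin 2 → E}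
  [Fintype ι] {t : ι → ℝ}

/-- The classifier whose dual point is `∑ ± (3 * t k, t k ^ 2)`, with the signs of the
vertex `e`. -/
noncomputable def cubeTarget (u : Fin 2 → E) (t : ι → ℝ) (e : ι → Bool) : E → Bool :=
  dualClassifier u (signedSum (fun k => 3 * t k) e) (signedSum (fun k => t k ^ 2) e)

/-- The dual line of slope `t k` at vertical distance `2 * t k ^ 2` from the dual point of
`cubeTarget u t v.1`, below it if the label `v.2` is `true` and above it otherwise. Flipping the
`k`-th sign moves the dual point by `4 * t k ^ 2` relative to this line, hence to the mirror
position on its other side. -/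
def cubePoint (u : Fin 2 → E) (t : ι → ℝ) (v : (ι → Bool) × Bool) (k : ι) : E :=
  planePoint u (t k) (signedSum (fun k => t k ^ 2) v.1 - t k * signedSum (fun k => 3 * t k) v.1 -
    boolSign v.2 * (2 * t k ^ 2))

lemma cubeTarget_cubePoint (hu : Orthonormal ℝ u) (ht : ∀ k, t k ≠ 0) (v : (ι → Bool) × Bool)
    (k : ι) : cubeTarget u t v.1 (cubePoint u t v k) = v.2 := by
  have hk := ht k
  refine dualClassifier_planePoint hu (r := 2 * t k ^ 2) (by positivity) ?_
  ring

lemma cubePoint_injective (hu : Orthonormal ℝ u) (ht : Function.Injective t)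
    (v : (ι → Bool) × Bool) : Function.Injective (cubePoint u t v) := by
  have hcoord (k : ι) : ⟪planePoint u 1 0, cubePoint u t v k⟫ = t k := by
    simp [cubePoint, inner_planePoint hu]
  intro j k hjk
  exact ht (by rw [← hcoord j, hjk, hcoord k])

lemma cubePoint_cubeMirror_self [DecidableEq ι] {k : ι} {v : (ι → Bool) × Bool}
    (hv : v.1 k = !v.2) : cubePoint u t (cubeMirror k v) k = cubePoint u t v k := by
  simp only [cubePoint, cubeMirror, signedSum_update _ hv, boolSign_not]
  congr 1
  ring

lemma cubeTarget_cubePoint_cubeMirror [DecidableEq ι] (hu : Orthonormal ℝ u) {j k : ι}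
    (hjk : 3 * t j * t k < t j ^ 2 + t k ^ 2) {v : (ι → Bool) × Bool} (hv : v.1 k = !v.2) :
    cubeTarget u t v.1 (cubePoint u t (cubeMirror k v) j) = !v.2 := by
  simp only [cubePoint, cubeMirror, signedSum_update _ hv]
  refine dualClassifier_planePoint hu
    (r := 2 * (t j ^ 2 + t k ^ 2 - 3 * t j * t k)) (by linarith) ?_
  rw [boolSign_not]
  ring

/-- The mirror family of linear classifiers in the plane of `u` indexed by the vertices of a
hypercube together with a label. -/
noncomputable def cubeFamily [DecidableEq ι] (hu : Orthonormal ℝ u) (ht : ∀ k, t k ≠ 0)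
    (hsep : Pairwise fun j k => 3 * t j * t k < t j ^ 2 + t k ^ 2) :
    MirrorFamily E ((ι → Bool) × Bool) ι where
  target v := cubeTarget u t v.1
  label v := v.2
  point := cubePoint u t
  active k := {v | v.1 k = !v.2}
  mirror := cubeMirror
  target_point := cubeTarget_cubePoint hu ht
  point_injective := cubePoint_injective hu (injective_of_pairwise_lt ht hsep)
  mirror_mem_active := by simp [cubeMirror]
  mirror_mirror hv := cubeMirror_cubeMirror (by simpa using hv)
  label_mirror _ := rfl
  point_mirror_self hv := cubePoint_cubeMirror_self (by simpa using hv)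
  target_point_mirror hv _ hjk :=
    cubeTarget_cubePoint_cubeMirror hu (hsep hjk) (by simpa using hv)

lemma card_le_two_mul_card_active_cubeFamily [DecidableEq ι] (hu : Orthonormal ℝ u)
    (ht : ∀ k, t k ≠ 0) (hsep : Pairwise fun j k => 3 * t j * t k < t j ^ 2 + t k ^ 2) (k : ι) :
    Fintype.card ((ι → Bool) × Bool) ≤ 2 * #((cubeFamily hu ht hsep).active k) := by
  have hcard : #(univ : Finset (ι → Bool)) ≤ #((cubeFamily hu ht hsep).active k) :=
    card_le_card_of_injOn (fun e => (e, !e k)) (by simp [cubeFamily, Set.MapsTo])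
      fun _ _ _ _ h => congrArg Prod.fst h
  rw [Fintype.card_prod, Fintype.card_bool, mul_comm]
  gcongr
  exact hcard

end Hypercube

lemma three_mul_three_pow_mul_lt {j k : ℕ} (hjk : j ≠ k) :
    3 * (3 : ℝ) ^ j * 3 ^ k < (3 ^ j) ^ 2 + (3 ^ k) ^ 2 := by
  wlog h : j < k generalizing j k
  · linarith [this hjk.symm (by omega)]
  have hj : (0 : ℝ) < 3 ^ j := by positivity
  have hle : (3 : ℝ) * 3 ^ j ≤ 3 ^ k := by
    rw [← pow_succ']
    exact pow_le_pow_right₀ (by norm_num) h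
  nlinarith

theorem stmt2_general {E : Type*} [NormedAddCommGroup E] [InnerProductSpace ℝ E]
    [MeasurableSpace E] (hE : 2 ≤ Module.rank ℝ E) :
    ∃ ε : ℝ, 0 < ε ∧ ε < 1 ∧ ∃ δ : ℝ, 0 < δ ∧ δ < 1 ∧
      ∀ m : ℕ, ∀ (Ω : Type*) (_ : MeasurableSpace Ω) (μ : Measure Ω),
        IsProbabilityMeasure μ →
        ∀ a : Multiset (E × Bool) → Ω → E → Bool,
        ∃ (w : E) (b : ℝ) (D : Measure (E × Bool)),
          IsProbabilityMeasure D ∧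
          D {p : E × Bool | p.2 = decide (0 ≤ ⟪w, p.1⟫ + b)} = 1 ∧
          ENNReal.ofReal δ <
            samples D m {f | ENNReal.ofReal ε <
              atkRand D μ (fun x => decide (0 ≤ ⟪w, x⟫ + b)) (toTrain f) a} := by
  refine ⟨1 / 16, by norm_num, by norm_num, 1 / 32, by norm_num, by norm_num, ?_⟩
  intro m Ω _ μ _ a
  obtain ⟨u, hu⟩ := exists_orthonormal_of_le_rank (n := 2) (mod_cast hE)
  have ht (k : Fin (2 * m + 1)) : (3 : ℝ) ^ (k : ℕ) ≠ 0 := by positivity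
  have hsep : Pairwise fun j k : Fin (2 * m + 1) =>
      3 * (3 : ℝ) ^ (j : ℕ) * 3 ^ (k : ℕ) < (3 ^ (j : ℕ)) ^ 2 + (3 ^ (k : ℕ)) ^ 2 :=
    fun _ _ hjk => three_mul_three_pow_mul_lt (Fin.val_ne_of_ne hjk)
  have hδε : ENNReal.ofReal (1 / 32) + ENNReal.ofReal (1 / 16) < 8⁻¹ := by
    rw [← ENNReal.ofReal_add (by norm_num) (by norm_num), ← ENNReal.ofReal_ofNat,
      ← ENNReal.ofReal_inv_of_pos (by norm_num), ENNReal.ofReal_lt_ofReal_iff (by norm_num)]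
    norm_num
  let F := cubeFamily hu ht hsep
  obtain ⟨v, hv⟩ := F.exists_lt_samples_lt_atkRand μ a
    (card_le_two_mul_card_active_cubeFamily hu ht hsep) (m := m) (by simp) hδε
  exact ⟨_, _, F.distribution v, inferInstance, F.distribution_graph_target v, hv⟩

/-- For `n ≥ 2`, the class of linear classifiers on `ℝⁿ` is not robust learnable: there are
`ε, δ ∈ (0,1)` such that for every sample size `m` and every (randomized) learner, some
linear target and distribution over its graph force attackable rate `> ε` with probability
`> δ`. -/
theorem stmt2 (n : ℕ) (hn : 2 ≤ n) :
    ∃ ε : ℝ, 0 < ε ∧ ε < 1 ∧ ∃ δ : ℝ, 0 < δ ∧ δ < 1 ∧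
      ∀ m : ℕ, ∀ (Ω : Type*) (_ : MeasurableSpace Ω) (μ : Measure Ω),
        IsProbabilityMeasure μ →
        ∀ a : Multiset (EuclideanSpace ℝ (Fin n) × Bool) → Ω →
            EuclideanSpace ℝ (Fin n) → Bool,
        ∃ (w : EuclideanSpace ℝ (Fin n)) (b : ℝ)
          (D : Measure (EuclideanSpace ℝ (Fin n) × Bool)),
          IsProbabilityMeasure D ∧
          D {p : EuclideanSpace ℝ (Fin n) × Bool | p.2 = decide (0 ≤ ⟪w, p.1⟫ + b)} = 1 ∧
          ENNReal.ofReal δ <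
            samples D m {f | ENNReal.ofReal ε <
              atkRand D μ (fun x => decide (0 ≤ ⟪w, x⟫ + b)) (toTrain f) a} := by
  exact stmt2_general (by rw [← Module.finrank_eq_rank]; simpa using hn)
end

section
/- For every integer d ≥ 1, every integer t ≥ 1, and every ε ∈ (0, 3/8], there exist an instance space X ⊆ ℝ³ and a hypothesis class H on X with VC dimension exactly 5d such that: for every m ∈ ℕ with m < 3td/(64ε) and every (possibly randomized) learning algorithm A, there exist a target h* ∈ H and a distribution D over D_{h*} with E_{S_trn~D^m}[ atk_D(t, h*, S_trn, A) ] > ε. -/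
open MeasureTheory ENNReal

/-- The `t`-point clean-label attackable rate of a randomized learner. -/
noncomputable def atkRandT {X : Type*} [MeasurableSpace X] {Ω : Type*} [MeasurableSpace Ω]
    (t : ℕ) (D : Measure (X × Bool)) (μ : Measure Ω) (h : X → Bool)
    (S : Multiset (X × Bool)) (a : Multiset (X × Bool) → Ω → X → Bool) : ℝ≥0∞ :=
  ⨆ Adv : {f : X → Multiset (X × Bool) //
      ∀ x : X, (∀ p ∈ f x, p.2 = h p.1) ∧ (f x).card ≤ t},
    (D.prod μ) {q : (X × Bool) × Ω | a (S + Adv.1 q.1.1) q.2 q.1.1 ≠ h q.1.1}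

/-- `H` shatters the finite set `C`. -/
def Shatters {X : Type*} (H : Set (X → Bool)) (C : Finset X) : Prop :=
  ∀ f : X → Bool, ∃ h ∈ H, ∀ x ∈ C, h x = f x

/-- `H` has VC dimension exactly `d`. -/
def VCdimEq {X : Type*} (H : Set (X → Bool)) (d : ℕ) : Prop :=
  (∃ C : Finset X, C.card = d ∧ Shatters H C) ∧ ∀ C : Finset X, Shatters H C → C.card ≤ d

/-!
Over a group `G` of order `t`, consider lines of slope `0` or `1` in `G × G`, each with a sign: the
points of the line carry that sign as label and all other points carry the opposite one. Through a
point of such a line passes a line of the other slope; with the opposite sign it reverses the label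
of that point, and as the two lines do not meet again, every other point of one line gets the
same label from both.

A target consists of one signed line in each of `d` blocks. If a test point of its line in some
block was not drawn, and at most `t` training points lie in that block, then the attacker may add
the training points that the crossing target would have produced in that block. The attacker of the
crossing target adds those of the original one, and the learner sees the same data in both cases,
so its two errors at the test point add up to at least `1`. Averaging over all targets makes one of
them bad, and with few draws the training sample satisfies both conditions with probability more
than `3/4`, by a union bound and Markov's inequality.

Signed lines shatter at most four points per block, and points outside the blocks, on which
hypotheses are unconstrained, raise the VC dimension to the prescribed value.
-/

lemma Shatters.two_pow_card_le_card {X A : Type*} [Fintype A] {H : Set (X → Bool)} {C : Finset X}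
    (h : Shatters H C) (F : A → C → Bool) (hF : ∀ g ∈ H, ∃ a, ∀ x : C, F a x = g x) :
    2 ^ C.card ≤ Fintype.card A := by
  classical
  have hsurj : Function.Surjective F := fun f => by
    obtain ⟨g, hg, hgf⟩ := h fun x => if hx : x ∈ C then f ⟨x, hx⟩ else false
    obtain ⟨a, ha⟩ := hF g hg
    exact ⟨a, funext fun x => by simp [ha, hgf x x.2]⟩
  simpa using Fintype.card_le_of_surjective F hsurj

/-- The class of hypotheses on `ι × Y` that restrict to a member of `H` on every block
`{i} × Y`, with no relation between different blocks. -/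
def blockClass (ι : Type*) {Y : Type*} (H : Set (Y → Bool)) : Set (ι × Y → Bool) :=
  {h | ∀ i, (fun y => h (i, y)) ∈ H}

lemma Shatters.card_le_of_blockClass {ι Y : Type*} [Fintype ι] {H : Set (Y → Bool)} {n : ℕ}
    (hH : ∀ C : Finset Y, Shatters H C → C.card ≤ n) {C : Finset (ι × Y)}
    (hC : Shatters (blockClass ι H) C) : C.card ≤ n * Fintype.card ι := by
  classical
  have hfibre (i : ι) : (C.filter fun p => p.1 = i).card ≤ n := by
    have hinj : Set.InjOn Prod.snd (C.filter fun p => p.1 = i : Set (ι × Y)) := by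
      rintro ⟨j, y⟩ hp ⟨j', y'⟩ hp' h
      simp_all
    rw [← Finset.card_image_of_injOn hinj]
    refine hH _ fun f => ?_
    obtain ⟨h, hh, hhf⟩ := hC fun p => f p.2
    refine ⟨_, hh i, fun y hy => ?_⟩
    obtain ⟨⟨j, y'⟩, hp, rfl⟩ := Finset.mem_image.1 hy
    obtain ⟨hmem, rfl⟩ := Finset.mem_filter.1 hp
    exact hhf _ hmem
  calc C.card = ∑ i, (C.filter fun p => p.1 = i).card :=
        Finset.card_eq_sum_card_fiberwise fun _ _ => Finset.mem_coe.2 (Finset.mem_univ _)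
    _ ≤ ∑ _i : ι, n := Finset.sum_le_sum fun i _ => hfibre i
    _ = n * Fintype.card ι := by simp [mul_comm]

lemma exists_vcdimEq_le {X : Type*} {H : Set (X → Bool)} (hne : H.Nonempty) {n : ℕ}
    (hn : ∀ C : Finset X, Shatters H C → C.card ≤ n) : ∃ v ≤ n, VCdimEq H v := by
  classical
  let P (k : ℕ) : Prop := ∃ C : Finset X, C.card = k ∧ Shatters H C
  have hP : P 0 := ⟨∅, rfl, fun _ => ⟨hne.some, hne.some_mem, by simp⟩⟩
  exact ⟨Nat.findGreatest P n, Nat.findGreatest_le _,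
    Nat.findGreatest_spec (Nat.zero_le _) hP,
    fun C hC => Nat.le_findGreatest (hn C hC) ⟨C, rfl, hC⟩⟩

lemma VCdimEq.preimage_embedding {X Y : Type*} {H : Set (Y → Bool)} {v : ℕ}
    (h : VCdimEq H v) (e : Y ↪ X) (hfin : (Set.range e)ᶜ.Finite) :
    VCdimEq {g : X → Bool | g ∘ e ∈ H} (v + (Set.range e)ᶜ.ncard) := by
  classical
  obtain ⟨⟨C, hCv, hC⟩, hmax⟩ := h
  rw [Set.ncard_eq_toFinset_card _ hfin]
  constructor
  · refine ⟨C.map e ∪ hfin.toFinset, ?_, fun f => ?_⟩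
    · rw [Finset.card_union_of_disjoint, Finset.card_map, hCv]
      rw [Finset.disjoint_left]
      simp
    · obtain ⟨g, hg, hgf⟩ := hC (f ∘ e)
      have hext : Function.extend e g f ∘ e = g := Function.extend_comp e.injective g f
      refine ⟨Function.extend e g f, by rwa [Set.mem_ofPred_eq, hext], fun x hx => ?_⟩
      rcases Finset.mem_union.1 hx with hx | hx
      · obtain ⟨y, hy, rfl⟩ := Finset.mem_map.1 hx
        rw [e.injective.extend_apply, hgf y hy, Function.comp_apply]
      · exact Function.extend_apply' _ _ _ (hfin.mem_toFinset.1 hx)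
  · intro C hC
    have hrange : (C.filter fun x => x ∈ Set.range e).card ≤ v := by
      rw [← Finset.card_preimage C e e.injective.injOn]
      refine hmax _ fun f => ?_
      obtain ⟨g, hg, hgf⟩ := hC (Function.extend e f fun _ => false)
      refine ⟨g ∘ e, hg, fun y hy => ?_⟩
      rw [Function.comp_apply, hgf _ (Finset.mem_preimage.1 hy), e.injective.extend_apply]
    rw [← Finset.card_filter_add_card_filter_not (s := C) (fun x => x ∈ Set.range e)]
    gcongr
    exact fun x hx => hfin.mem_toFinset.2 (Finset.mem_filter.1 hx).2

/-- A line of slope `0` or `1` in `G × G`, together with the label given to its points. -/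
structure SignedLine (G : Type*) where
  steep : Bool
  sign : Bool
  intercept : G

namespace SignedLine

variable {G : Type*}

/-- The coordinates of a signed line, which make `SignedLine G` finite for finite `G`. -/
def equivProd : SignedLine G ≃ Bool × Bool × G where
  toFun l := (l.steep, l.sign, l.intercept)
  invFun p := ⟨p.1, p.2.1, p.2.2⟩

noncomputable instance [Fintype G] : Fintype (SignedLine G) := .ofEquiv _ equivProd.symm

instance [Nonempty G] : Nonempty (SignedLine G) := equivProd.nonempty

variable [AddCommGroup G]

/-- The height of the line `l` over the abscissa `j`. -/
def eval (l : SignedLine G) (j : G) : G := l.intercept + if l.steep then j else 0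

/-- The line of the other slope that meets `l` over the abscissa `j`, with the other sign. -/
def flip (j : G) (l : SignedLine G) : SignedLine G :=
  ⟨!l.steep, !l.sign, l.intercept + if l.steep then j else -j⟩

/-- The line of given slope and sign through the point `q`. -/
def through (b s : Bool) (q : G × G) : SignedLine G :=
  ⟨b, s, q.2 - if b then q.1 else 0⟩

lemma flip_involutive (j : G) : Function.Involutive (flip j) := by
  rintro ⟨b, s, c⟩
  cases b <;> simp [flip]

lemma eval_flip_eq_iff (l : SignedLine G) (j j' : G) :
    (l.flip j).eval j' = l.eval j' ↔ j' = j := by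
  rcases l with ⟨b, s, c⟩
  cases b
  · simp [eval, flip, add_assoc, neg_add_eq_zero, eq_comm]
  · simp [eval, flip, eq_comm]

lemma eq_through_of_eval_eq {l : SignedLine G} {q : G × G} (h : q.2 = l.eval q.1) :
    l = through l.steep l.sign q := by
  simp [through, h, eval]

variable [DecidableEq G]

/-- The hypothesis on `G × G` given by `l`: points of the line are labelled `l.sign`, all other
points `!l.sign`. -/
def label (l : SignedLine G) (q : G × G) : Bool :=
  if q.2 = l.eval q.1 then l.sign else !l.sign

lemma label_flip_self (l : SignedLine G) (j : G) :
    (l.flip j).label (j, l.eval j) = !l.label (j, l.eval j) := by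
  have hmeet : (l.flip j).eval j = l.eval j := (l.eval_flip_eq_iff j j).2 rfl
  simp only [label, hmeet, if_true]
  rfl

lemma label_flip_of_ne (l : SignedLine G) {j j' : G} (hj : j' ≠ j) :
    (l.flip j).label (j', l.eval j') = l.label (j', l.eval j') := by
  have hne : l.eval j' ≠ (l.flip j).eval j' := fun h => hj ((l.eval_flip_eq_iff j j').1 h.symm)
  simp only [label, hne, if_false, if_true]
  exact Bool.not_not _

-- On `C`, a signed line is determined by its slope, its sign and some point of `C` it passes
-- through, if there is any.
lemma two_pow_card_le_of_shatters {C : Finset (G × G)}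
    (hC : Shatters (Set.range (label (G := G))) C) :
    2 ^ C.card ≤ 4 * (C.card + 1) := by
  let F (a : Bool × Bool × Option C) (q : C) : Bool :=
    a.2.2.elim (!a.2.1) fun p => (through a.1 a.2.1 p.1).label q.1
  have hF : ∀ g ∈ Set.range (label (G := G)), ∃ a, ∀ q : C, F a q = g q := by
    rintro _ ⟨l, rfl⟩
    by_cases hl : ∃ p : C, p.1.2 = l.eval p.1.1
    · obtain ⟨p, hp⟩ := hl
      refine ⟨(l.steep, l.sign, some p), fun q => ?_⟩
      simp only [F, Option.elim_some, ← eq_through_of_eval_eq hp]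
    · push Not at hl
      exact ⟨(l.steep, l.sign, none), fun q => by simp [F, label, hl q]⟩
  refine (hC.two_pow_card_le_card F hF).trans_eq ?_
  simp
  ring

lemma card_le_four_of_shatters {C : Finset (G × G)}
    (hC : Shatters (Set.range (label (G := G))) C) :
    C.card ≤ 4 := by
  have hgrowth (n : ℕ) (hn : 5 ≤ n) : 4 * (n + 1) < 2 ^ n := by
    induction n, hn using Nat.le_induction with
    | base => norm_num
    | succ n _ ih => rw [pow_succ]; omega
  by_contra! h
  exact (two_pow_card_le_of_shatters hC).not_gt (hgrowth _ h)

end SignedLine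

section Attack

variable {X Ω : Type*} [MeasurableSpace Ω]

/-- `P` is an admissible answer of a `t`-point clean-label attacker against the target `h`. -/
def IsCleanPoison (t : ℕ) (h : X → Bool) (P : Multiset (X × Bool)) : Prop :=
  (∀ p ∈ P, p.2 = h p.1) ∧ P.card ≤ t

/-- The largest probability, over the seed of the learner `a`, with which a `t`-point clean-label
attacker who sees the training set `S` makes `a` err at the test point `x`. -/
noncomputable def pointAtk (t : ℕ) (μ : Measure Ω) (h : X → Bool) (S : Multiset (X × Bool))
    (a : Multiset (X × Bool) → Ω → X → Bool) (x : X) : ℝ≥0∞ :=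
  ⨆ P : {P // IsCleanPoison t h P}, μ {ω | a (S + P.1) ω x ≠ h x}

/-- The training set `S` for `h` and the training set `S'` for `h'` can be poisoned into the same
data set, although the two targets disagree at `x`. -/
def Confusable (t : ℕ) (h h' : X → Bool) (S S' : Multiset (X × Bool)) (x : X) : Prop :=
  h x ≠ h' x ∧
    ∃ P P', IsCleanPoison t h P ∧ IsCleanPoison t h' P' ∧ S + P = S' + P'

lemma Confusable.one_le_pointAtk_add {t : ℕ} {h h' : X → Bool} {S S' : Multiset (X × Bool)}
    {x : X} (hc : Confusable t h h' S S' x) (μ : Measure Ω) [IsProbabilityMeasure μ]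
    (a : Multiset (X × Bool) → Ω → X → Bool) :
    1 ≤ pointAtk t μ h S a x + pointAtk t μ h' S' a x := by
  obtain ⟨hx, P, P', hP, hP', heq⟩ := hc
  calc 1 = μ Set.univ := measure_univ.symm
    _ ≤ μ ({ω | a (S + P) ω x ≠ h x} ∪ {ω | a (S' + P') ω x ≠ h' x}) := by
        refine measure_mono fun ω _ => ?_
        rw [← heq]
        by_contra! hω
        simp only [Set.mem_union, Set.mem_ofPred_eq, not_or, not_not] at hω
        exact hx (hω.1.symm.trans hω.2)
    _ ≤ _ := (measure_union_le _ _).trans <| add_le_add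
        (le_iSup (fun P : {P // IsCleanPoison t h P} => μ {ω | a (S + P.1) ω x ≠ h x}) ⟨P, hP⟩)
        (le_iSup (fun P : {P // IsCleanPoison t h' P} => μ {ω | a (S' + P.1) ω x ≠ h' x}) ⟨P', hP'⟩)

lemma toTrain_eq_add_compl {α : Type*} {m : ℕ} (f : Fin m → α) (s : Finset (Fin m)) :
    toTrain f = s.val.map f + sᶜ.val.map f := by
  have hsplit : s.val + sᶜ.val = Finset.univ.val := by
    rw [← Finset.disjUnion_val s sᶜ disjoint_compl_right, Finset.disjUnion_eq_union,
      Finset.union_compl]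
  rw [← Multiset.map_add, hsplit, Fin.univ_val_map, toTrain]

-- Each side receives the examples of the other side at the indices in `s`.
lemma Confusable.of_eq_off {m t : ℕ} {h h' : X → Bool} {f f' : Fin m → X × Bool} {x : X}
    (hx : h x ≠ h' x) (s : Finset (Fin m)) (hs : s.card ≤ t) (heq : ∀ k ∉ s, f k = f' k)
    (hf : ∀ k ∈ s, (f k).2 = h' (f k).1) (hf' : ∀ k ∈ s, (f' k).2 = h (f' k).1) :
    Confusable t h h' (toTrain f) (toTrain f') x := by
  refine ⟨hx, s.val.map f', s.val.map f, ⟨?_, by simpa⟩, ⟨?_, by simpa⟩, ?_⟩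
  · simpa using hf'
  · simpa using hf
  · have hoff : sᶜ.val.map f = sᶜ.val.map f' :=
      Multiset.map_congr rfl fun k hk => heq k (Finset.mem_compl.1 hk)
    rw [toTrain_eq_add_compl f s, toTrain_eq_add_compl f' s, hoff]
    abel

lemma exists_iSup_le_add {A : Type*} [Nonempty A] {f : A → ℝ≥0∞} (hf : ⨆ i, f i ≠ ∞)
    {δ : ℝ≥0∞} (hδ : δ ≠ 0) : ∃ i, ⨆ j, f j ≤ f i + δ := by
  by_contra! h
  have hle : (⨆ i, f i) + δ ≤ ⨆ i, f i := by
    rw [ENNReal.iSup_add]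
    exact iSup_le fun i => (h i).le
  exact (ENNReal.lt_add_right hf hδ).not_ge hle

lemma lintegral_measure_preimage_le_prod {α β : Type*} [MeasurableSpace α] [MeasurableSpace β]
    (μ : Measure α) (ν : Measure β) [SFinite ν] (s : Set (α × β)) :
    ∫⁻ x, ν (Prod.mk x ⁻¹' s) ∂μ ≤ (μ.prod ν) s := by
  rw [← measure_toMeasurable s, Measure.prod_apply (measurableSet_toMeasurable _ _)]
  exact lintegral_mono fun x => measure_mono (Set.preimage_mono (subset_toMeasurable _ _))

variable [MeasurableSpace X]

-- An attacker may answer every test point almost optimally.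
lemma lintegral_pointAtk_le_atkRandT (t : ℕ) (D : Measure (X × Bool)) [IsProbabilityMeasure D]
    (μ : Measure Ω) [IsFiniteMeasure μ] (h : X → Bool) (S : Multiset (X × Bool))
    (a : Multiset (X × Bool) → Ω → X → Bool) :
    ∫⁻ p, pointAtk t μ h S a p.1 ∂D ≤ atkRandT t D μ h S a := by
  have : Nonempty {P // IsCleanPoison t h P} := ⟨0, by simp [IsCleanPoison]⟩
  refine ENNReal.le_of_forall_pos_le_add fun δ hδ _ => ?_
  have hnear (x : X) : ∃ P : {P // IsCleanPoison t h P},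
      pointAtk t μ h S a x ≤ μ {ω | a (S + P.1) ω x ≠ h x} + δ :=
    exists_iSup_le_add (ne_top_of_le_ne_top (measure_ne_top μ Set.univ)
      (iSup_le fun _ => measure_mono (Set.subset_univ _))) (by simpa using hδ.ne')
  choose P hP using hnear
  let Q : {f : X → Multiset (X × Bool) // ∀ x, IsCleanPoison t h (f x)} :=
    ⟨fun x => (P x).1, fun x => (P x).2⟩
  calc ∫⁻ p, pointAtk t μ h S a p.1 ∂D
      ≤ ∫⁻ p, (μ {ω | a (S + Q.1 p.1) ω p.1 ≠ h p.1} + δ) ∂D := lintegral_mono fun p => hP p.1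
    _ = ∫⁻ p, μ {ω | a (S + Q.1 p.1) ω p.1 ≠ h p.1} ∂D + δ := by
        rw [lintegral_add_right _ measurable_const, lintegral_const, measure_univ, mul_one]
    _ ≤ (D.prod μ) {q | a (S + Q.1 q.1.1) q.2 q.1.1 ≠ h q.1.1} + δ := by
        gcongr
        exact lintegral_measure_preimage_le_prod D μ {q | a (S + Q.1 q.1.1) q.2 q.1.1 ≠ h q.1.1}
    _ ≤ atkRandT t D μ h S a + δ := by
        gcongr
        exact le_iSup (fun Adv : {f : X → Multiset (X × Bool) // ∀ x, IsCleanPoison t h (f x)} =>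
          (D.prod μ) {q : (X × Bool) × Ω | a (S + Adv.1 q.1.1) q.2 q.1.1 ≠ h q.1.1}) Q

variable [Countable X] [MeasurableSingletonClass X] {U : Type*} [Countable U] [MeasurableSpace U]
  [DiscreteMeasurableSpace U] {m : ℕ}

lemma lintegral_prod_pointAtk_le (t : ℕ) (ν : Measure U) [IsProbabilityMeasure ν]
    (μ : Measure Ω) [IsFiniteMeasure μ] (h : X → Bool) (ex : U → X × Bool)
    (a : Multiset (X × Bool) → Ω → X → Bool) :
    ∫⁻ q, pointAtk t μ h (toTrain fun k => ex (q.1 k)) a (ex q.2).1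
        ∂((Measure.pi fun _ : Fin m => ν).prod ν) ≤
      ∫⁻ f, atkRandT t (ν.map ex) μ h (toTrain f) a ∂(samples (ν.map ex) m) := by
  have hprob : IsProbabilityMeasure (ν.map ex) :=
    Measure.isProbabilityMeasure_map Measurable.of_discrete.aemeasurable
  have hsamples : samples (ν.map ex) m =
      (Measure.pi fun _ : Fin m => ν).map fun z k => ex (z k) := by
    rw [samples, Measure.pi_map_pi fun _ => Measurable.of_discrete.aemeasurable]
  rw [hsamples, lintegral_map Measurable.of_discrete Measurable.of_discrete,
    lintegral_prod _ Measurable.of_discrete.aemeasurable]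
  refine lintegral_mono fun z => ?_
  calc ∫⁻ u, pointAtk t μ h (toTrain fun k => ex (z k)) a (ex u).1 ∂ν
      = ∫⁻ p, pointAtk t μ h (toTrain fun k => ex (z k)) a p.1 ∂(ν.map ex) := by
        rw [lintegral_map Measurable.of_discrete Measurable.of_discrete]
    _ ≤ _ := lintegral_pointAtk_le_atkRandT t (ν.map ex) μ h _ a

-- Averaging over `θ`: the errors at `θ` and `τ θ` add up to at least `1` on `E`, and since `τ` is a
-- permutation both have the same average.
theorem exists_measure_le_two_mul_lintegral_atkRandT {Θ : Type*} [Finite Θ] [Nonempty Θ] (t : ℕ)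
    (ν : Measure U) [IsProbabilityMeasure ν] (μ : Measure Ω) [IsProbabilityMeasure μ]
    (h : Θ → X → Bool) (ex : Θ → U → X × Bool) (a : Multiset (X × Bool) → Ω → X → Bool)
    (E : Set ((Fin m → U) × U))
    (hE : ∀ q ∈ E, ∃ τ : Equiv.Perm Θ, ∀ θ, (ex (τ θ) q.2).1 = (ex θ q.2).1 ∧
      Confusable t (h θ) (h (τ θ)) (toTrain fun k => ex θ (q.1 k))
        (toTrain fun k => ex (τ θ) (q.1 k)) (ex θ q.2).1) :
    ∃ θ, ((Measure.pi fun _ : Fin m => ν).prod ν) E ≤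
      2 * ∫⁻ f, atkRandT t (ν.map (ex θ)) μ (h θ) (toTrain f) a ∂(samples (ν.map (ex θ)) m) := by
  have := Fintype.ofFinite Θ
  let err (θ : Θ) (q : (Fin m → U) × U) : ℝ≥0∞ :=
    pointAtk t μ (h θ) (toTrain fun k => ex θ (q.1 k)) a (ex θ q.2).1
  have hpoint (q) : ∑ _θ : Θ, E.indicator 1 q ≤ 2 * ∑ θ, err θ q := by
    by_cases hq : q ∈ E
    · obtain ⟨τ, hτ⟩ := hE q hq
      calc ∑ _θ : Θ, E.indicator 1 q ≤ ∑ θ, (err θ q + err (τ θ) q) :=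
            Finset.sum_le_sum fun θ _ => by
              simpa only [hq, Set.indicator_of_mem, Pi.one_apply, err, (hτ θ).1] using
                (hτ θ).2.one_le_pointAtk_add μ a
        _ = 2 * ∑ θ, err θ q := by
            rw [Finset.sum_add_distrib, Equiv.sum_comp τ fun θ => err θ q, two_mul]
    · simp [hq]
  by_contra! hlt
  refine (ENNReal.sum_lt_sum_of_nonempty Finset.univ_nonempty fun θ _ => hlt θ).not_ge ?_
  calc ∑ _θ : Θ, ((Measure.pi fun _ : Fin m => ν).prod ν) E
      = ∫⁻ q, ∑ _θ : Θ, E.indicator 1 q ∂((Measure.pi fun _ : Fin m => ν).prod ν) := by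
        rw [lintegral_finsetSum _ fun _ _ => Measurable.of_discrete,
          lintegral_indicator_one MeasurableSet.of_discrete]
    _ ≤ ∫⁻ q, 2 * ∑ θ, err θ q ∂((Measure.pi fun _ : Fin m => ν).prod ν) := lintegral_mono hpoint
    _ = 2 * ∑ θ, ∫⁻ q, err θ q ∂((Measure.pi fun _ : Fin m => ν).prod ν) := by
        rw [lintegral_const_mul _ Measurable.of_discrete,
          lintegral_finsetSum _ fun _ _ => Measurable.of_discrete]
    _ ≤ _ := by
        rw [← Finset.mul_sum]
        gcongr with θ
        exact lintegral_prod_pointAtk_le t ν μ (h θ) (ex θ) a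

end Attack

section Sampling

variable {κ U : Type*} [Fintype κ] [MeasurableSpace U] (ν : Measure U) [IsProbabilityMeasure ν]

lemma measure_pi_exists_mem_le (s : Set U) :
    (Measure.pi fun _ : κ => ν) {z | ∃ k, z k ∈ s} ≤ Fintype.card κ * ν s :=
  calc (Measure.pi fun _ : κ => ν) {z | ∃ k, z k ∈ s}
      = (Measure.pi fun _ : κ => ν) (⋃ k, Function.eval k ⁻¹' s) := by
        congr 1
        ext z
        simp
    _ ≤ ∑ k : κ, (Measure.pi fun _ : κ => ν) (Function.eval k ⁻¹' s) :=
        measure_iUnion_fintype_le _ _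
    _ ≤ ∑ _k : κ, ν s := Finset.sum_le_sum fun k _ =>
        (measurePreserving_eval (fun _ : κ => ν) k).measure_preimage_le s
    _ = Fintype.card κ * ν s := by simp

lemma mul_measure_pi_le_card_filter_le {s : Set U} [DecidablePred (· ∈ s)] (hs : MeasurableSet s)
    (t : ℕ) :
    t * (Measure.pi fun _ : κ => ν) {z | t ≤ (Finset.univ.filter fun k => z k ∈ s).card} ≤
      Fintype.card κ * ν s := by
  have hmeas (k : κ) : Measurable fun z : κ → U => s.indicator (1 : U → ℝ≥0∞) (z k) :=
    (measurable_one.indicator hs).comp (measurable_pi_apply k)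
  have hcount (z : κ → U) : ∑ k, s.indicator (1 : U → ℝ≥0∞) (z k) =
      (Finset.univ.filter fun k => z k ∈ s).card := by
    simp [Set.indicator_apply]
  calc t * (Measure.pi fun _ : κ => ν) {z | t ≤ (Finset.univ.filter fun k => z k ∈ s).card}
      = t * (Measure.pi fun _ : κ => ν) {z | t ≤ ∑ k, s.indicator (1 : U → ℝ≥0∞) (z k)} := by
        simp only [hcount, Nat.cast_le]
    _ ≤ ∫⁻ z, ∑ k, s.indicator (1 : U → ℝ≥0∞) (z k) ∂(Measure.pi fun _ : κ => ν) :=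
        mul_meas_ge_le_lintegral (Finset.measurable_fun_sum _ fun k _ => hmeas k) _
    _ = ∑ _k : κ, ∫⁻ u, s.indicator 1 u ∂ν := by
        rw [lintegral_finsetSum _ fun k _ => hmeas k]
        exact Finset.sum_congr rfl fun k _ =>
          (measurePreserving_eval (fun _ : κ => ν) k).lintegral_comp (measurable_one.indicator hs)
    _ = Fintype.card κ * ν s := by simp [lintegral_indicator_one hs]

-- Union bound for drawing `u`, Markov's inequality for the number of draws from `s`.
lemma one_sub_le_measure_pi_ne_and_card_filter_le {s : Set U} [DecidablePred (· ∈ s)]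
    (hs : MeasurableSet s) {t : ℕ} (ht : t ≠ 0) {r : ℝ≥0∞} {u : U} (hu : ν {u} ≤ r)
    (hsr : ν s ≤ t * r) :
    1 - Fintype.card κ * (2 * r) ≤ (Measure.pi fun _ : κ => ν)
      {z | (∀ k, z k ≠ u) ∧ (Finset.univ.filter fun k => z k ∈ s).card ≤ t} := by
  have hfew : (Measure.pi fun _ : κ => ν)
      {z | t ≤ (Finset.univ.filter fun k => z k ∈ s).card} ≤ Fintype.card κ * r := by
    refine (ENNReal.mul_le_mul_iff_right (Nat.cast_ne_zero.2 ht) (ENNReal.natCast_ne_top t)).1 ?_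
    calc _ ≤ Fintype.card κ * ν s := mul_measure_pi_le_card_filter_le ν hs t
      _ ≤ Fintype.card κ * (t * r) := by gcongr
      _ = t * (Fintype.card κ * r) := mul_left_comm _ _ _
  have havoid : (Measure.pi fun _ : κ => ν) {z | ∃ k, z k ∈ ({u} : Set U)} ≤
      Fintype.card κ * r := (measure_pi_exists_mem_le ν {u}).trans (by gcongr)
  rw [tsub_le_iff_right, ← measure_univ (μ := Measure.pi fun _ : κ => ν)]
  calc (Measure.pi fun _ : κ => ν) Set.univ
      ≤ (Measure.pi fun _ : κ => ν)
        ({z | (∀ k, z k ≠ u) ∧ (Finset.univ.filter fun k => z k ∈ s).card ≤ t} ∪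
          ({z | ∃ k, z k ∈ ({u} : Set U)} ∪
            {z | t ≤ (Finset.univ.filter fun k => z k ∈ s).card})) := by
        refine measure_mono fun z _ => ?_
        by_cases hz : ∀ k, z k ≠ u
        · rcases le_total (Finset.univ.filter fun k => z k ∈ s).card t with h | h
          exacts [.inl ⟨hz, h⟩, .inr (.inr h)]
        · push Not at hz
          exact .inr (.inl hz)
    _ ≤ _ + (Fintype.card κ * r + Fintype.card κ * r) :=
        (measure_union_le _ _).trans <| by
          gcongr
          exact (measure_union_le _ _).trans (add_le_add havoid hfew)
    _ = _ := by ring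

end Sampling

section BlockConstruction

/-- Replaces the line of the block `p.1` by the line that crosses it over the abscissa `p.2`. -/
def flipAt {ι G : Type*} [DecidableEq ι] [AddCommGroup G] (p : ι × G)
    (σ : ι → SignedLine G) : ι → SignedLine G :=
  Function.update σ p.1 ((σ p.1).flip p.2)

lemma flipAt_involutive {ι G : Type*} [DecidableEq ι] [AddCommGroup G] (p : ι × G) :
    Function.Involutive (flipAt p) := fun σ => by
  simp [flipAt, SignedLine.flip_involutive p.2 (σ p.1)]

variable {ι G X : Type*} [AddCommGroup G] [DecidableEq G]

/-- The target on `X` that follows the signed line `σ i` on the `i`-th embedded copy of `G × G`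
and is `false` elsewhere. -/
noncomputable def lineTarget (e : ι × G × G ↪ X) (σ : ι → SignedLine G) : X → Bool :=
  Function.extend e (fun p => (σ p.1).label p.2) fun _ => false

/-- The labelled example drawn at the index `u`: `none` gives the base point `x₀`, and
`some (i, j)` gives the point over the abscissa `j` of the line of the `i`-th block. -/
noncomputable def drawExample (e : ι × G × G ↪ X) (x₀ : X) (σ : ι → SignedLine G)
    (u : Option (ι × G)) : X × Bool :=
  let x := u.elim x₀ fun p => e (p.1, p.2, (σ p.1).eval p.2)
  (x, lineTarget e σ x)

lemma lineTarget_apply (e : ι × G × G ↪ X) (σ : ι → SignedLine G) (p : ι × G × G) :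
    lineTarget e σ (e p) = (σ p.1).label p.2 :=
  e.injective.extend_apply _ _ p

lemma lineTarget_comp_mem_blockClass (e : ι × G × G ↪ X) (σ : ι → SignedLine G) :
    lineTarget e σ ∘ e ∈ blockClass ι (Set.range SignedLine.label) := fun i =>
  ⟨σ i, funext fun q => (lineTarget_apply e σ (i, q)).symm⟩

variable [DecidableEq ι]

lemma drawExample_flipAt_fst (e : ι × G × G ↪ X) (x₀ : X) (σ : ι → SignedLine G) (p : ι × G) :
    (drawExample e x₀ (flipAt p σ) (some p)).1 = (drawExample e x₀ σ (some p)).1 := by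
  simp [drawExample, flipAt, (SignedLine.eval_flip_eq_iff (σ p.1) p.2 p.2).2 rfl]

lemma lineTarget_flipAt_drawExample_self (e : ι × G × G ↪ X) (x₀ : X) (σ : ι → SignedLine G)
    (p : ι × G) :
    lineTarget e (flipAt p σ) (drawExample e x₀ σ (some p)).1 =
      !lineTarget e σ (drawExample e x₀ σ (some p)).1 := by
  simp [drawExample, flipAt, lineTarget_apply, SignedLine.label_flip_self]

lemma lineTarget_flipAt_drawExample (e : ι × G × G ↪ X) (x₀ : X) (σ : ι → SignedLine G)
    {p : ι × G} {u : Option (ι × G)} (hu : u.map Prod.fst = some p.1) (hne : u ≠ some p) :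
    (drawExample e x₀ σ u).2 = lineTarget e (flipAt p σ) (drawExample e x₀ σ u).1 := by
  obtain ⟨⟨i, j⟩, rfl, rfl⟩ := Option.map_eq_some_iff.1 hu
  have hj : j ≠ p.2 := fun h => hne (congrArg some (Prod.ext rfl h))
  simp [drawExample, flipAt, lineTarget_apply, SignedLine.label_flip_of_ne _ hj]

lemma drawExample_flipAt_of_ne (e : ι × G × G ↪ X) {x₀ : X} (hx₀ : x₀ ∉ Set.range e)
    (σ : ι → SignedLine G) {p : ι × G} {u : Option (ι × G)} (hu : u.map Prod.fst ≠ some p.1) :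
    drawExample e x₀ (flipAt p σ) u = drawExample e x₀ σ u := by
  rcases u with _ | ⟨i, j⟩
  · simp [drawExample, lineTarget, Function.extend_apply' _ _ _ hx₀]
  · have hi : i ≠ p.1 := by simpa using hu
    simp [drawExample, flipAt, lineTarget_apply, hi]

lemma confusable_flipAt {m t : ℕ} (e : ι × G × G ↪ X) {x₀ : X} (hx₀ : x₀ ∉ Set.range e)
    (σ : ι → SignedLine G) {p : ι × G} {z : Fin m → Option (ι × G)} (hne : ∀ k, z k ≠ some p)
    (hcard : (Finset.univ.filter fun k => (z k).map Prod.fst = some p.1).card ≤ t) :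
    Confusable t (lineTarget e σ) (lineTarget e (flipAt p σ))
      (toTrain fun k => drawExample e x₀ σ (z k))
      (toTrain fun k => drawExample e x₀ (flipAt p σ) (z k)) (drawExample e x₀ σ (some p)).1 := by
  refine .of_eq_off ?_ (Finset.univ.filter fun k => (z k).map Prod.fst = some p.1) hcard
    (fun k hk => ?_) (fun k hk => ?_) (fun k hk => ?_)
  · simp [lineTarget_flipAt_drawExample_self]
  · exact (drawExample_flipAt_of_ne e hx₀ σ (by simpa using hk)).symm
  · exact lineTarget_flipAt_drawExample e x₀ σ (by simpa using hk) (hne k)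
  · simpa only [flipAt_involutive p σ] using
      lineTarget_flipAt_drawExample e x₀ (flipAt p σ) (by simpa using hk) (hne k)

end BlockConstruction

section DrawLaw

variable (ι G : Type*) [Fintype ι] [Nonempty ι] [Fintype G] [Nonempty G]

/-- The law of the index of an example: mass `w` is spread uniformly over `ι × G`, and the
remaining mass sits at `none`. -/
noncomputable def drawPMF (w : ℝ≥0∞) (hw : w ≤ 1) : PMF (Option (ι × G)) :=
  .ofFintype (fun u => u.elim (1 - w) fun _ => w / Fintype.card (ι × G)) <| by
    rw [Fintype.sum_option]
    simp only [Option.elim_none, Option.elim_some, Finset.sum_const, Finset.card_univ,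
      nsmul_eq_mul]
    rw [ENNReal.mul_div_cancel (by simp) (ENNReal.natCast_ne_top _), tsub_add_cancel_of_le hw]

variable {ι G} [MeasurableSpace (Option (ι × G))] [DiscreteMeasurableSpace (Option (ι × G))]
  {w : ℝ≥0∞} (hw : w ≤ 1)

lemma drawPMF_toMeasure_some (p : ι × G) :
    (drawPMF ι G w hw).toMeasure {some p} = w / Fintype.card (ι × G) := by
  rw [PMF.toMeasure_apply_singleton _ _ (measurableSet_singleton _)]
  rfl

lemma drawPMF_toMeasure_block_le (i : ι) :
    (drawPMF ι G w hw).toMeasure {u | u.map Prod.fst = some i} ≤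
      Fintype.card G * (w / Fintype.card (ι × G)) :=
  calc (drawPMF ι G w hw).toMeasure {u | u.map Prod.fst = some i}
      ≤ (drawPMF ι G w hw).toMeasure (⋃ j, {some (i, j)}) := by
        refine measure_mono fun u hu => ?_
        obtain ⟨⟨i', j⟩, rfl, rfl⟩ := Option.map_eq_some_iff.1 hu
        exact Set.mem_iUnion.2 ⟨j, rfl⟩
    _ ≤ ∑ j, (drawPMF ι G w hw).toMeasure {some (i, j)} := measure_iUnion_fintype_le _ _
    _ = Fintype.card G * (w / Fintype.card (ι × G)) := by
        simp only [drawPMF_toMeasure_some, Finset.sum_const, Finset.card_univ, nsmul_eq_mul]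

/-- The draws at which the attack succeeds: the test index is some `p ∈ ι × G` that does not occur
in the training sample, and at most `t` training indices lie in the block of `p`. -/
def attackableDraws (ι G : Type*) [DecidableEq ι] (m t : ℕ) :
    Set ((Fin m → Option (ι × G)) × Option (ι × G)) :=
  {q | ∃ p, q.2 = some p ∧ (∀ k, q.1 k ≠ some p) ∧
    (Finset.univ.filter fun k => (q.1 k).map Prod.fst = some p.1).card ≤ t}

lemma le_measure_attackableDraws [DecidableEq ι] (m : ℕ) :
    w * (1 - m * (2 * (w / Fintype.card (ι × G)))) ≤
      ((Measure.pi fun _ : Fin m => (drawPMF ι G w hw).toMeasure).prod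
        (drawPMF ι G w hw).toMeasure) (attackableDraws ι G m (Fintype.card G)) := by
  set ν := (drawPMF ι G w hw).toMeasure
  set r := w / Fintype.card (ι × G)
  have hmass : Fintype.card (ι × G) * r = w :=
    ENNReal.mul_div_cancel (by simp) (ENNReal.natCast_ne_top _)
  have hsection (p : ι × G) : 1 - m * (2 * r) ≤ (Measure.pi fun _ : Fin m => ν)
      ((fun z => (z, some p)) ⁻¹' attackableDraws ι G m (Fintype.card G)) := by
    have h := one_sub_le_measure_pi_ne_and_card_filter_le (κ := Fin m) ν
      (s := {u | u.map Prod.fst = some p.1}) MeasurableSet.of_discrete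
      (Fintype.card_ne_zero (α := G)) (drawPMF_toMeasure_some hw p).le
      (drawPMF_toMeasure_block_le hw p.1)
    rw [Fintype.card_fin] at h
    exact h.trans (measure_mono fun z hz => ⟨p, rfl, hz⟩)
  calc w * (1 - m * (2 * r)) = ∑ _p : ι × G, (1 - m * (2 * r)) * r := by
        rw [Finset.sum_const, Finset.card_univ, nsmul_eq_mul,
          mul_left_comm (Fintype.card (ι × G) : ℝ≥0∞), hmass, mul_comm]
    _ ≤ ∑ p : ι × G, (Measure.pi fun _ : Fin m => ν)
          ((fun z => (z, some p)) ⁻¹' attackableDraws ι G m (Fintype.card G)) * ν {some p} := by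
        gcongr with p
        · exact hsection p
        · exact (drawPMF_toMeasure_some hw p).ge
    _ ≤ ∑ u, (Measure.pi fun _ : Fin m => ν)
          ((fun z => (z, u)) ⁻¹' attackableDraws ι G m (Fintype.card G)) * ν {u} := by
        rw [Fintype.sum_option]
        exact le_add_self
    _ = _ := by rw [Measure.prod_apply_symm MeasurableSet.of_discrete, lintegral_fintype]

end DrawLaw

theorem exists_lineTarget_le_two_mul_lintegral_atkRandT {ι G X Ω : Type*} [Fintype ι]
    [Nonempty ι] [AddCommGroup G] [Fintype G] [DecidableEq G] [MeasurableSpace X] [Countable X]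
    [MeasurableSingletonClass X] [MeasurableSpace Ω] (e : ι × G × G ↪ X) {x₀ : X}
    (hx₀ : x₀ ∉ Set.range e) {w : ℝ≥0∞} (hw : w ≤ 1) (m : ℕ) (μ : Measure Ω)
    [IsProbabilityMeasure μ] (a : Multiset (X × Bool) → Ω → X → Bool) :
    ∃ σ : ι → SignedLine G, ∃ D : Measure (X × Bool), IsProbabilityMeasure D ∧
      D {p | p.2 = lineTarget e σ p.1} = 1 ∧
      w * (1 - m * (2 * (w / Fintype.card (ι × G)))) ≤
        2 * ∫⁻ f, atkRandT (Fintype.card G) D μ (lineTarget e σ) (toTrain f) a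
          ∂(samples D m) := by
  classical
  let _ : MeasurableSpace (Option (ι × G)) := ⊤
  have : DiscreteMeasurableSpace (Option (ι × G)) := ⟨fun _ => trivial⟩
  let ν := (drawPMF ι G w hw).toMeasure
  obtain ⟨σ, hσ⟩ := exists_measure_le_two_mul_lintegral_atkRandT (Fintype.card G) ν μ
    (lineTarget e) (drawExample e x₀) a (attackableDraws ι G m (Fintype.card G))
    fun q ⟨p, hp, hne, hcard⟩ => ⟨(flipAt_involutive p).toPerm, fun σ => by
      rw [hp]
      exact ⟨drawExample_flipAt_fst e x₀ σ p, confusable_flipAt e hx₀ σ hne hcard⟩⟩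
  refine ⟨σ, ν.map (drawExample e x₀ σ),
    Measure.isProbabilityMeasure_map Measurable.of_discrete.aemeasurable, ?_,
    (le_measure_attackableDraws hw m).trans hσ⟩
  have hlabel : drawExample e x₀ σ ⁻¹' {p | p.2 = lineTarget e σ p.1} = Set.univ :=
    Set.eq_univ_of_forall fun _ => rfl
  rw [Measure.map_apply Measurable.of_discrete MeasurableSet.of_discrete, hlabel, measure_univ]

lemma exists_vcdimEq_blockClass_label (ι G : Type*) [Fintype ι] [AddCommGroup G] [DecidableEq G] :
    ∃ v ≤ 4 * Fintype.card ι,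
      VCdimEq (blockClass ι (Set.range (SignedLine.label (G := G)))) v :=
  exists_vcdimEq_le ⟨fun p => SignedLine.label ⟨false, false, 0⟩ p.2, fun _ => ⟨_, rfl⟩⟩
    fun _ => Shatters.card_le_of_blockClass fun _ => SignedLine.card_le_four_of_shatters

lemma exists_finset_embedding_ncard_compl_range (E Y : Type*) [Infinite E] [Finite Y] (n : ℕ) :
    ∃ (s : Finset E) (e : Y ↪ s), (Set.range e)ᶜ.ncard = n := by
  have := Fintype.ofFinite Y
  obtain ⟨s, hs⟩ := Infinite.exists_subset_card_eq E (Fintype.card Y + n)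
  obtain ⟨e⟩ : Nonempty (Y ↪ s) := Function.Embedding.nonempty_of_card_le (by simp [hs])
  refine ⟨s, e, ?_⟩
  rw [Set.ncard_compl, Set.ncard_range_of_injective e.injective]
  simp [hs]

lemma two_mul_ofReal_lt_mul_one_sub {n m ε : ℝ} (hn : 0 < n) (hm : 0 ≤ m) (hε : 0 < ε)
    (hmn : m < 3 * n / (64 * ε)) :
    2 * ENNReal.ofReal ε < ENNReal.ofReal (8 * ε / 3) *
      (1 - ENNReal.ofReal m * (2 * (ENNReal.ofReal (8 * ε / 3) / ENNReal.ofReal n))) := by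
  have hquarter : m * (2 * (8 * ε / 3 / n)) < 1 / 4 := by
    rw [lt_div_iff₀ (by positivity)] at hmn
    rw [show m * (2 * (8 * ε / 3 / n)) = m * (64 * ε) / (12 * n) by field_simp; ring,
      div_lt_iff₀ (by positivity)]
    linarith
  rw [← ENNReal.ofReal_div_of_pos hn, ← ENNReal.ofReal_ofNat 2,
    ← ENNReal.ofReal_mul zero_le_two, ← ENNReal.ofReal_mul zero_le_two,
    ← ENNReal.ofReal_mul hm, ← ENNReal.ofReal_one, ← ENNReal.ofReal_sub _ (by positivity),
    ← ENNReal.ofReal_mul (by positivity), ENNReal.ofReal_lt_ofReal_iff_of_nonneg (by positivity)]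
  nlinarith

theorem stmt11_general {E : Type*} [MeasurableSpace E] [MeasurableSingletonClass E] [Infinite E]
    (d t v : ℕ) (hd : 1 ≤ d) (ht : 1 ≤ t) (hv : 4 * d < v) (ε : ℝ) (hε0 : 0 < ε)
    (hε : ε ≤ 3 / 8) :
    ∃ (Xs : Set E) (H : Set (Xs → Bool)),
      VCdimEq H v ∧
      ∀ m : ℕ, (m : ℝ) < 3 * t * d / (64 * ε) →
      ∀ (Ω : Type*) (_ : MeasurableSpace Ω) (μ : Measure Ω), IsProbabilityMeasure μ →
      ∀ a : Multiset (Xs × Bool) → Ω → Xs → Bool,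
      ∃ hstar ∈ H, ∃ D : Measure (Xs × Bool), IsProbabilityMeasure D ∧
        D {p : Xs × Bool | p.2 = hstar p.1} = 1 ∧
        ENNReal.ofReal ε <
          ∫⁻ f, atkRandT t D μ hstar (toTrain f) a ∂(samples D m) := by
  have : NeZero d := ⟨by lia⟩
  have : NeZero t := ⟨by lia⟩
  obtain ⟨v₀, hv₀, hvc⟩ := exists_vcdimEq_blockClass_label (Fin d) (ZMod t)
  rw [Fintype.card_fin] at hv₀
  obtain ⟨s, e, he⟩ :=
    exists_finset_embedding_ncard_compl_range E (Fin d × ZMod t × ZMod t) (v - v₀)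
  obtain ⟨x₀, hx₀⟩ : (Set.range e)ᶜ.Nonempty := Set.nonempty_of_ncard_ne_zero (by lia)
  refine ⟨s, {g | g ∘ e ∈ blockClass (Fin d) (Set.range SignedLine.label)}, ?_, ?_⟩
  · rw [← Nat.add_sub_of_le (show v₀ ≤ v by lia), ← he]
    exact hvc.preimage_embedding e (Set.toFinite _)
  intro m hm Ω _ μ _ a
  obtain ⟨σ, D, hD, hgraph, hatk⟩ := exists_lineTarget_le_two_mul_lintegral_atkRandT e hx₀
    (ENNReal.ofReal_le_one.2 (by linarith : 8 * ε / 3 ≤ 1)) m μ a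
  refine ⟨_, lineTarget_comp_mem_blockClass e σ, D, hD, hgraph, ?_⟩
  have hlt := two_mul_ofReal_lt_mul_one_sub (n := (d * t : ℕ)) (m := m)
    (by exact_mod_cast Nat.mul_pos hd ht) m.cast_nonneg hε0 (by push_cast; convert hm using 2; ring)
  simp only [ENNReal.ofReal_natCast] at hlt
  rw [Fintype.card_prod, Fintype.card_fin, ZMod.card] at hatk
  exact lt_of_mul_lt_mul_left' (hlt.trans_le hatk)

/-- Lower bound for `t`-point clean-label attacks: for every `d ≥ 1`, `t ≥ 1` and
`ε ∈ (0, 3/8]` there is a class of VC dimension `5d` (on an instance space in `ℝ³`) on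
which every learner with fewer than `3td/(64ε)` samples has expected `t`-point attackable
rate `> ε` for some target and distribution. -/
theorem stmt11 (d t : ℕ) (hd : 1 ≤ d) (ht : 1 ≤ t) (ε : ℝ) (hε0 : 0 < ε) (hε : ε ≤ 3 / 8) :
    ∃ (Xs : Set (EuclideanSpace ℝ (Fin 3))) (H : Set (Xs → Bool)),
      VCdimEq H (5 * d) ∧
      ∀ m : ℕ, (m : ℝ) < 3 * t * d / (64 * ε) →
      ∀ (Ω : Type*) (_ : MeasurableSpace Ω) (μ : Measure Ω), IsProbabilityMeasure μ →
      ∀ a : Multiset (Xs × Bool) → Ω → Xs → Bool,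
      ∃ hstar ∈ H, ∃ D : Measure (Xs × Bool), IsProbabilityMeasure D ∧
        D {p : Xs × Bool | p.2 = hstar p.1} = 1 ∧
        ENNReal.ofReal ε <
          ∫⁻ f, atkRandT t D μ hstar (toTrain f) a ∂(samples D m) := by
  exact stmt11_general d t (5 * d) hd ht (by lia) ε hε0 hε
end
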